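/- Let A be a finite-dimensional ℤ-graded ℂ-algebra and c a degree-2 central element of A. Every projective graded Ã_c-module, regarded as an (A,c)-complex, is isomorphic to the zero object in the homotopy category K(A,c); that is, its identity morphism is null-homotopic. Consequently, the canonical functor from graded Ã_c-modules to K(A,c) factors through the stable category Mod̲(Ã_c). -/

import Mathlib

/-!
STATEMENT 3: Let A be a finite-dimensional ℤ-graded ℂ-algebra and c a degree-2
central element.  Every projective graded Ã_c-module (i.e. projective object in the
category Com(A,c) of (A,c)-complexes) is zero in the homotopy category K(A,c): its
identity is null-homotopic.  Consequently every morphism of (A,c)-complexes that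
factors through a projective is null-homotopic, i.e. the canonical functor
Mod(Ã_c) → K(A,c) factors through the stable category Mod̲(Ã_c).
-/

universe u v

structure ACComplex (A : Type u) [Ring A] [Algebra ℂ A] (𝒜 : ℤ → Submodule ℂ A)
    (c : A) where
  carrier : Type v
  [acg : AddCommGroup carrier]
  [mod : Module A carrier]
  grading : ℤ → AddSubgroup carrier
  decomp : DirectSum.IsInternal grading
  smul_mem : ∀ {i j : ℤ} {a : A} {m : carrier},
    a ∈ 𝒜 i → m ∈ grading j → a • m ∈ grading (i + j)
  d : carrier →+ carrier
  d_degree : ∀ (i : ℤ), ∀ m ∈ grading i, d m ∈ grading (i + 1)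
  d_sq : ∀ m : carrier, d (d m) = c • m
  d_supercomm : ∀ (i : ℤ) (a : A), a ∈ 𝒜 i → ∀ m : carrier,
    d (a • m) = ((-1 : ℤ) ^ i.natAbs) • (a • d m)

attribute [instance] ACComplex.acg ACComplex.mod

variable {A : Type u} [Ring A] [Algebra ℂ A] {𝒜 : ℤ → Submodule ℂ A} {c : A}

def IsComplexMorphism (M N : ACComplex A 𝒜 c) (f : M.carrier →ₗ[A] N.carrier) : Prop :=
  (∀ i : ℤ, ∀ m ∈ M.grading i, f m ∈ N.grading i) ∧ ∀ m, f (M.d m) = N.d (f m)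

def IsNullHomotopic (M N : ACComplex A 𝒜 c) (f : M.carrier →ₗ[A] N.carrier) : Prop :=
  ∃ h : M.carrier →+ N.carrier,
    (∀ i : ℤ, ∀ m ∈ M.grading i, h m ∈ N.grading (i - 1)) ∧
    (∀ (i : ℤ) (a : A), a ∈ 𝒜 i → ∀ m : M.carrier,
      h (a • m) = ((-1 : ℤ) ^ i.natAbs) • (a • h m)) ∧
    (∀ m : M.carrier, f m = h (M.d m) + N.d (h m))

/-- A projective graded `Ã_c`-module, i.e. a projective object of the category
`Com(A,c)` of `(A,c)`-complexes: every morphism to the target of a surjective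
morphism of complexes lifts. -/
def IsProjectiveComplex (P : ACComplex.{u, v} A 𝒜 c) : Prop :=
  ∀ (X Y : ACComplex.{u, v} A 𝒜 c)
    (p : X.carrier →ₗ[A] Y.carrier) (f : P.carrier →ₗ[A] Y.carrier),
    IsComplexMorphism X Y p → Function.Surjective p → IsComplexMorphism P Y f →
    ∃ g : P.carrier →ₗ[A] X.carrier, IsComplexMorphism P X g ∧ p ∘ₗ g = f

/-!
The mapping cocone of the identity of `P` is contractible and surjects onto `P`, so a projective
`P` is a retract of it. In coordinates: on `P × P`, with the second factor shifted by one degree,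
take the differential `(x, y) ↦ (d x, ε x + d y)`, where `ε m = (-1)^{|m|} m`. The sign lets
`A` act diagonally, and since `ε² = 1` and `ε d = -d ε`, the map `(x, y) ↦ ε y` is a null-homotopy
of the projection `(x, y) ↦ x`. A section of this projection pulls it back to a null-homotopy
of the identity of `P`.
-/

section Internal

open DirectSum

variable {ι κ M N : Type*} [DecidableEq ι] [DecidableEq κ] [AddCommGroup M] [AddCommGroup N]
  {G : ι → AddSubgroup M} {H : ι → AddSubgroup N}

lemma range_coeAddMonoidHom : (DirectSum.coeAddMonoidHom G).range = ⨆ i, G i := by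
  refine le_antisymm ?_ (iSup_le fun i m hm =>
    ⟨of (fun i => G i) i ⟨m, hm⟩, DirectSum.coeAddMonoidHom_of ..⟩)
  rintro _ ⟨z, rfl⟩
  induction z using DirectSum.induction_on with
  | zero => exact zero_mem _
  | of i m =>
    rw [DirectSum.coeAddMonoidHom_of]
    exact AddSubgroup.mem_iSup_of_mem i m.2
  | add x y hx hy =>
    rw [map_add]
    exact add_mem hx hy

lemma isInternal_iff_iSupIndep_and_iSup_eq_top :
    IsInternal G ↔ iSupIndep G ∧ ⨆ i, G i = ⊤ := by
  rw [iSupIndep_iff_dfinsuppSumAddHom_injective, ← range_coeAddMonoidHom,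
    AddMonoidHom.range_eq_top]
  rfl

lemma isInternal_comp_equiv (hG : IsInternal G) (e : κ ≃ ι) : IsInternal fun k => G (e k) := by
  rw [isInternal_iff_iSupIndep_and_iSup_eq_top] at hG ⊢
  exact ⟨hG.1.comp e.injective, (e.iSup_comp (g := G)).trans hG.2⟩

lemma isInternal_prod (hG : IsInternal G) (hH : IsInternal H) :
    IsInternal fun i => (G i).prod (H i) := by
  rw [isInternal_iff_iSupIndep_and_iSup_eq_top] at hG hH ⊢
  refine ⟨fun i => ?_, ?_⟩
  · have hle : ⨆ j, ⨆ _ : j ≠ i, (G j).prod (H j) ≤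
        (⨆ j, ⨆ _ : j ≠ i, G j).prod (⨆ j, ⨆ _ : j ≠ i, H j) :=
      iSup₂_le fun j hj => AddSubgroup.prod_mono (le_iSup₂ (f := fun j _ => G j) j hj)
        (le_iSup₂ (f := fun j _ => H j) j hj)
    refine AddSubgroup.disjoint_def.mpr fun hz hz' => Prod.ext ?_ ?_
    · exact AddSubgroup.disjoint_def.mp (hG.1 i) hz.1 (hle hz').1
    · exact AddSubgroup.disjoint_def.mp (hH.1 i) hz.2 (hle hz').2
  · have hinl : ⨆ i, G i ≤ (⨆ i, (G i).prod (H i)).comap (AddMonoidHom.inl M N) :=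
      iSup_le fun i x hx => AddSubgroup.mem_iSup_of_mem i ⟨hx, zero_mem _⟩
    have hinr : ⨆ i, H i ≤ (⨆ i, (G i).prod (H i)).comap (AddMonoidHom.inr M N) :=
      iSup_le fun i y hy => AddSubgroup.mem_iSup_of_mem i ⟨zero_mem _, hy⟩
    rw [hG.2] at hinl
    rw [hH.2] at hinr
    refine eq_top_iff.mpr fun z _ => ?_
    rw [← Prod.fst_add_snd z]
    exact add_mem (hinl trivial) (hinr trivial)

end Internal

lemma negOnePow_smul {M : Type*} [AddCommGroup M] (i : ℤ) (m : M) :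
    i.negOnePow • m = (-1 : ℤ) ^ i.natAbs • m := by
  rw [Units.smul_def, ← Int.coe_negOnePow, Int.cast_id]

namespace ACComplex

variable (P : ACComplex A 𝒜 c)

noncomputable instance : DirectSum.Decomposition P.grading :=
  P.decomp.chooseDecomposition

/-- The grading involution `ε` of a complex, acting on the part of degree `i` as `(-1)^i`. -/
noncomputable def parity : P.carrier →+ P.carrier :=
  (DirectSum.toAddMonoid fun i => (i.negOnePow : ℤ) • (P.grading i).subtype).comp
    (DirectSum.decomposeAddEquiv P.grading).toAddMonoidHom

variable {P}

lemma parity_of_mem {i : ℤ} {m : P.carrier} (hm : m ∈ P.grading i) :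
    P.parity m = i.negOnePow • m := by
  change DirectSum.toAddMonoid _ (DirectSum.decompose P.grading m) = _
  rw [DirectSum.decompose_of_mem _ hm, DirectSum.toAddMonoid_of]
  rfl

lemma parity_mem {i : ℤ} {m : P.carrier} (hm : m ∈ P.grading i) : P.parity m ∈ P.grading i :=
  parity_of_mem hm ▸ zsmul_mem hm _

lemma parity_parity (m : P.carrier) : P.parity (P.parity m) = m := by
  induction m using DirectSum.Decomposition.inductionOn P.grading with
  | zero => simp only [map_zero]
  | homogeneous m =>
    rw [parity_of_mem (parity_mem m.2), parity_of_mem m.2, smul_smul, Int.units_mul_self, one_smul]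
  | add x y hx hy => rw [map_add, map_add, hx, hy]

lemma parity_d (m : P.carrier) : P.parity (P.d m) = -P.d (P.parity m) := by
  induction m using DirectSum.Decomposition.inductionOn P.grading with
  | zero => simp only [map_zero, neg_zero]
  | @homogeneous i m =>
    rw [parity_of_mem (P.d_degree i m m.2), parity_of_mem m.2, Int.negOnePow_succ, Units.neg_smul,
      Units.smul_def, Units.smul_def, map_zsmul]
  | add x y hx hy => simp only [map_add, hx, hy, neg_add]

lemma parity_smul {i : ℤ} {a : A} (ha : a ∈ 𝒜 i) (m : P.carrier) :
    P.parity (a • m) = (-1 : ℤ) ^ i.natAbs • a • P.parity m := by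
  rw [← negOnePow_smul]
  induction m using DirectSum.Decomposition.inductionOn P.grading with
  | zero => simp only [map_zero, smul_zero]
  | homogeneous m =>
    rw [parity_of_mem (P.smul_mem ha m.2), parity_of_mem m.2, Int.negOnePow_add, mul_smul,
      smul_comm a]
  | add x y hx hy => rw [smul_add, map_add, map_add, hx, hy, smul_add, smul_add]

variable (P) in
/-- The mapping cocone of the identity of `P`, that is, the cone of the identity of `P[-1]`. It is
contractible and surjects onto `P` by the first projection. The sign `ε` in the differential takes
the place of a twist of the `A`-action on the shifted factor, so `A` acts diagonally. -/
noncomputable def idCocone : ACComplex A 𝒜 c where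
  carrier := P.carrier × P.carrier
  grading i := (P.grading i).prod (P.grading (i - 1))
  decomp := isInternal_prod P.decomp (isInternal_comp_equiv P.decomp (Equiv.subRight 1))
  smul_mem ha hm := ⟨P.smul_mem ha hm.1, add_sub_assoc _ _ (1 : ℤ) ▸ P.smul_mem ha hm.2⟩
  d := (P.d.comp (AddMonoidHom.fst _ _)).prod (P.parity.coprod P.d)
  d_degree := by
    rintro i ⟨x, y⟩ ⟨hx, hy⟩
    have hdy : P.d y ∈ P.grading i := by simpa using P.d_degree _ y hy
    refine ⟨P.d_degree i x hx, ?_⟩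
    rw [add_sub_cancel_right]
    exact add_mem (parity_mem hx) hdy
  d_sq := by
    rintro ⟨x, y⟩
    refine Prod.ext (P.d_sq x) ?_
    change P.parity (P.d x) + P.d (P.parity x + P.d y) = c • y
    rw [parity_d, map_add, P.d_sq, neg_add_cancel_left]
  d_supercomm := by
    rintro i a ha ⟨x, y⟩
    refine Prod.ext (P.d_supercomm i a ha x) ?_
    change P.parity (a • x) + P.d (a • y) = (-1 : ℤ) ^ i.natAbs • a • (P.parity x + P.d y)
    rw [parity_smul ha, P.d_supercomm i a ha, smul_add, smul_add]

variable (P) in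
/-- The projection of `idCocone P` onto `P`, typed as a map out of the carrier of the complex. -/
def idCoconeFst : P.idCocone.carrier →ₗ[A] P.carrier :=
  LinearMap.fst A P.carrier P.carrier

lemma idCoconeFst_surjective : Function.Surjective P.idCoconeFst :=
  Prod.fst_surjective

lemma isComplexMorphism_idCoconeFst : IsComplexMorphism P.idCocone P P.idCoconeFst :=
  ⟨fun _ _ hm => hm.1, fun _ => rfl⟩

lemma isNullHomotopic_idCoconeFst : IsNullHomotopic P.idCocone P P.idCoconeFst := by
  refine ⟨P.parity.comp (AddMonoidHom.snd _ _), fun i m hm => parity_mem hm.2,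
    fun i a ha m => parity_smul ha m.2, ?_⟩
  rintro ⟨x, y⟩
  change x = P.parity (P.parity x + P.d y) + P.d (P.parity y)
  rw [map_add, parity_parity, parity_d, neg_add_cancel_right]

end ACComplex

lemma isComplexMorphism_id (M : ACComplex A 𝒜 c) : IsComplexMorphism M M LinearMap.id :=
  ⟨fun _ _ hm => hm, fun _ => rfl⟩

namespace IsNullHomotopic

variable {L M N : ACComplex A 𝒜 c}

lemma comp_left {f : L.carrier →ₗ[A] M.carrier} {g : M.carrier →ₗ[A] N.carrier}
    (hf : IsNullHomotopic L M f) (hg : IsComplexMorphism M N g) :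
    IsNullHomotopic L N (g ∘ₗ f) := by
  obtain ⟨h, hdeg, hsmul, hf⟩ := hf
  refine ⟨g.toAddMonoidHom.comp h, fun i m hm => hg.1 _ _ (hdeg i m hm),
    fun i a ha m => ?_, fun m => ?_⟩
  · change g (h (a • m)) = (-1 : ℤ) ^ i.natAbs • a • g (h m)
    rw [hsmul i a ha, map_zsmul, map_smul]
  · change g (f m) = g (h (L.d m)) + N.d (g (h m))
    rw [hf, map_add, hg.2]

lemma comp_right {f : L.carrier →ₗ[A] M.carrier} {g : M.carrier →ₗ[A] N.carrier}
    (hg : IsNullHomotopic M N g) (hf : IsComplexMorphism L M f) :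
    IsNullHomotopic L N (g ∘ₗ f) := by
  obtain ⟨h, hdeg, hsmul, hg⟩ := hg
  refine ⟨h.comp f.toAddMonoidHom, fun i m hm => hdeg _ _ (hf.1 i m hm),
    fun i a ha m => ?_, fun m => ?_⟩
  · change h (f (a • m)) = (-1 : ℤ) ^ i.natAbs • a • h (f m)
    rw [map_smul, hsmul i a ha]
  · change g (f m) = h (f (L.d m)) + N.d (h (f m))
    rw [hg, hf.2]

end IsNullHomotopic

lemma IsProjectiveComplex.isNullHomotopic_id {P : ACComplex A 𝒜 c} (hP : IsProjectiveComplex P) :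
    IsNullHomotopic P P LinearMap.id := by
  obtain ⟨g, hg, hsec⟩ := hP P.idCocone P P.idCoconeFst LinearMap.id
    ACComplex.isComplexMorphism_idCoconeFst ACComplex.idCoconeFst_surjective
    (isComplexMorphism_id P)
  exact hsec ▸ ACComplex.isNullHomotopic_idCoconeFst.comp_right hg

theorem projective_complex_contractible_general :
    (∀ P : ACComplex.{u, v} A 𝒜 c, IsProjectiveComplex P →
      IsNullHomotopic P P LinearMap.id) ∧
    (∀ (M N : ACComplex A 𝒜 c) (f : M.carrier →ₗ[A] N.carrier),
      (∃ (P : ACComplex.{u, v} A 𝒜 c) (q : M.carrier →ₗ[A] P.carrier)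
          (r : P.carrier →ₗ[A] N.carrier),
        IsProjectiveComplex P ∧ IsComplexMorphism M P q ∧ IsComplexMorphism P N r ∧
        f = r ∘ₗ q) →
      IsNullHomotopic M N f) := by
  refine ⟨fun P hP => hP.isNullHomotopic_id, ?_⟩
  rintro M N _ ⟨P, q, r, hP, hq, hr, rfl⟩
  exact (hP.isNullHomotopic_id.comp_left hr).comp_right hq

/-- Over a finite-dimensional ℤ-graded ℂ-algebra `A` with a
degree-2 central element `c`: (1) every projective graded `Ã_c`-module, viewed as
an `(A,c)`-complex, is isomorphic to zero in the homotopy category `K(A,c)`, i.e.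
its identity morphism is null-homotopic; and (2) consequently any morphism of
`(A,c)`-complexes factoring through a projective is null-homotopic, so the
canonical functor from graded `Ã_c`-modules to `K(A,c)` factors through the
stable category `Mod̲(Ã_c)`. -/
theorem projective_complex_contractible
    [GradedAlgebra 𝒜] [FiniteDimensional ℂ A]
    (hc : c ∈ 𝒜 2) (hc_central : ∀ a : A, c * a = a * c) :
    (∀ P : ACComplex.{u, v} A 𝒜 c, IsProjectiveComplex P →
      IsNullHomotopic P P LinearMap.id) ∧
    (∀ (M N : ACComplex.{u, v} A 𝒜 c) (f : M.carrier →ₗ[A] N.carrier),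
      IsComplexMorphism M N f →
      (∃ (P : ACComplex.{u, v} A 𝒜 c) (q : M.carrier →ₗ[A] P.carrier)
          (r : P.carrier →ₗ[A] N.carrier),
        IsProjectiveComplex P ∧ IsComplexMorphism M P q ∧ IsComplexMorphism P N r ∧
        f = r ∘ₗ q) →
      IsNullHomotopic M N f) :=
  projective_complex_contractible_general.imp_right fun h M N f _ => h M N f
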